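/- Suppose 𝒮 is primitive, i.e. there exists k₀ ≥ 1 such that 𝒮^{k₀}[Q] ≻ 0 for every Q ⪰ 0 with Q ≠ 0. Then P ∈ (0,∞), and for every Q ⪰ 0 with Q ≠ 0 the bracketing bounds converge to P exponentially fast: writing, for any Hermitian B with 𝒮[B] ≻ 0, σ_B := { t ∈ ℝ : ∃ v ≠ 0, B v = t·𝒮[B] v }, there exist constants C > 0 and r ∈ [0,1) such that for all k ≥ k₀ one has |min σ_{𝒮^k[Q]} − P| ≤ C·r^k and |max σ_{𝒮^k[Q]} − P| ≤ C·r^k. -/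

import Mathlib

open Matrix ComplexOrder ENNReal

noncomputable section

abbrev Mat (N : ℕ) := Matrix (Fin N) (Fin N) ℂ

/-- Real quadratic form `v* A v` (real part). -/
def qf {N : ℕ} (A : Mat N) (v : Fin N → ℂ) : ℝ := (star v ⬝ᵥ A *ᵥ v).re

/-- The congruence map `Q ↦ Lᴴ Q L`. -/
def conjBy {N : ℕ} (L : Mat N) : Mat N →ₗ[ℂ] Mat N where
  toFun Q := Lᴴ * Q * L
  map_add' Q Q' := by simp [Matrix.mul_add, Matrix.add_mul]
  map_smul' a Q := by simp [Matrix.mul_smul, Matrix.smul_mul]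

/-- The operator `𝒮[Q] = 𝒱[(L⁻¹)ᴴ Q L⁻¹]`. -/
def Smap {N : ℕ} (L : Mat N) (V : Mat N →ₗ[ℂ] Mat N) : Module.End ℂ (Mat N) :=
  V ∘ₗ conjBy L⁻¹

/-- `P := sup_{Q ≻ 0} inf_{v ≠ 0} (v* L* Q L v)/(v* 𝒱[Q] v)`, valued in `[0,∞]`,
with the convention that a ratio with zero denominator and positive numerator is `∞`. -/
def Pval {N : ℕ} (L : Mat N) (V : Mat N →ₗ[ℂ] Mat N) : ℝ≥0∞ :=
  ⨆ Q : {Q : Mat N // Q.PosDef}, ⨅ v : {v : Fin N → ℂ // v ≠ 0},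
    ENNReal.ofReal (qf (Lᴴ * Q.1 * L) v.1) / ENNReal.ofReal (qf (V Q.1) v.1)

/-- Spectral radius of a linear endomorphism of matrix space: the largest modulus of an
eigenvalue. -/
def specRad {N : ℕ} (f : Module.End ℂ (Mat N)) : ℝ :=
  sSup {r : ℝ | ∃ μ : ℂ, f.HasEigenvalue μ ∧ r = ‖μ‖}
/-- The generalized spectrum of the pencil `(B, 𝒮[B])`. -/
def genSpec {N : ℕ} (L : Mat N) (V : Mat N →ₗ[ℂ] Mat N) (B : Mat N) : Set ℝ :=
  {t : ℝ | ∃ v : Fin N → ℂ, v ≠ 0 ∧ B *ᵥ v = (t : ℂ) • ((Smap L V) B *ᵥ v)}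

/-!
In the Loewner order, `min σ_B` and `max σ_B` are the best constants with
`min σ_B • 𝒮[B] ≤ B ≤ max σ_B • 𝒮[B]`.

They bracket `P`, which the substitution `B = Lᴴ Q L` turns into `sup_{B ≻ 0} min σ_B`. Indeed,
suppose `A ≤ M • 𝒮[A]` and `t • 𝒮[B] ≤ B`, and let `m` be maximal with `m • A ≤ B`. Then
`B ≥ t • 𝒮[B] ≥ (t * m) • 𝒮[A] ≥ (t * m / M) • A`, so `t ≤ M`.

The bracket shrinks geometrically by Birkhoff's contraction argument. By compactness `T = 𝒮^{k₀}`
satisfies `(a * tr X) • T[1] ≤ T[X] ≤ (tr X) • T[1]` for `X ≥ 0`, with some `a > 0`. If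
`m • B ≤ A ≤ M • B`, applying this to `A - m • B` and `M • B - A` raises the lower constant and
lowers the upper one by a total of `a * (M - m)` on passing from `(A, B)` to `(T[A], T[B])`.
-/

section OrderedModule

variable {𝕜 E F : Type*} [Field 𝕜] [LinearOrder 𝕜] [IsStrictOrderedRing 𝕜]
  [AddCommGroup E] [PartialOrder E] [Module 𝕜 E]
  [AddCommGroup F] [PartialOrder F] [Module 𝕜 F] [PosSMulMono 𝕜 F]

theorem smul_map_le_map_of_mem_Icc_smul {T : E →ₗ[𝕜] F} {φ : E →ₗ[𝕜] 𝕜} {e : F} {a : 𝕜}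
    (ha : 0 ≤ a) (hφ : ∀ x, 0 ≤ x → 0 ≤ φ x)
    (hT : ∀ x, 0 ≤ x → T x ∈ Set.Icc ((a * φ x) • e) (φ x • e))
    {x y : E} (hx : 0 ≤ x) (hy : 0 ≤ y) (hφy : 0 < φ y) :
    (a * φ x / φ y) • T y ≤ T x :=
  calc (a * φ x / φ y) • T y ≤ (a * φ x / φ y) • (φ y • e) :=
        smul_le_smul_of_nonneg_left (hT y hy).2 (div_nonneg (mul_nonneg ha (hφ x hx)) hφy.le)
    _ = (a * φ x) • e := by rw [smul_smul, div_mul_cancel₀ _ hφy.ne']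
    _ ≤ T x := (hT x hx).1

variable [IsOrderedAddMonoid E] [IsOrderedAddMonoid F]

theorem exists_map_mem_Icc_smul_sub_eq {T : E →ₗ[𝕜] F} {φ : E →ₗ[𝕜] 𝕜} {e : F} {a : 𝕜}
    (ha : 0 ≤ a) (hφ : ∀ x, 0 ≤ x → 0 ≤ φ x)
    (hT : ∀ x, 0 ≤ x → T x ∈ Set.Icc ((a * φ x) • e) (φ x • e))
    {x y : E} (hy : 0 ≤ y) (hφy : 0 < φ y) {m M : 𝕜} (hxy : x ∈ Set.Icc (m • y) (M • y)) :
    ∃ m' M', T x ∈ Set.Icc (m' • T y) (M' • T y) ∧ M' - m' = (1 - a) * (M - m) := by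
  have hm := smul_map_le_map_of_mem_Icc_smul ha hφ hT (sub_nonneg.2 hxy.1) hy hφy
  have hM := smul_map_le_map_of_mem_Icc_smul ha hφ hT (sub_nonneg.2 hxy.2) hy hφy
  simp only [map_sub, map_smul, smul_eq_mul] at hm hM
  refine ⟨m + a * (φ x - m * φ y) / φ y, M - a * (M * φ y - φ x) / φ y, ⟨?_, ?_⟩, ?_⟩
  · rw [add_smul]
    exact le_sub_iff_add_le'.1 hm
  · rw [sub_smul]
    exact le_sub_comm.1 hM
  · field_simp
    ring

theorem le_of_smul_map_le_of_le_smul_map {S : F →ₗ[𝕜] F} (hS : ∀ x, 0 ≤ x → 0 ≤ S x) {x y : F}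
    {m t M : 𝕜} (hm : IsGreatest {s : 𝕜 | s • x ≤ y} m) (hm0 : 0 < m) (hM : 0 < M)
    (hx : x ≤ M • S x) (hy : t • S y ≤ y) : t ≤ M := by
  by_contra! hMt
  have hmap : m • S x ≤ S y := by
    simpa only [map_sub, map_smul, sub_nonneg] using hS _ (sub_nonneg.2 hm.1)
  have hlevel : (t * m / M) • x ≤ y :=
    calc (t * m / M) • x ≤ (t * m / M) • (M • S x) :=
          smul_le_smul_of_nonneg_left hx (by have := hM.trans hMt; positivity)
      _ = t • (m • S x) := by rw [smul_smul, smul_smul, div_mul_cancel₀ _ hM.ne']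
      _ ≤ t • S y := smul_le_smul_of_nonneg_left hmap (hM.trans hMt).le
      _ ≤ y := hy
  have hle : t * m / M ≤ m := hm.2 hlevel
  rw [div_le_iff₀ hM, mul_comm] at hle
  exact hMt.not_ge (le_of_mul_le_mul_left hle hm0)

end OrderedModule

section CStarAlgebra

variable {A : Type*} [CStarAlgebra A] [PartialOrder A] [StarOrderedRing A]

theorem exists_pos_algebraMap_le_of_isCompact {s : Set A} (hs : IsCompact s)
    (hpos : ∀ a ∈ s, IsStrictlyPositive a) : ∃ ε > (0 : ℝ), ∀ a ∈ s, algebraMap ℝ A ε ≤ a := by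
  rcases subsingleton_or_nontrivial A with _ | _
  · exact ⟨1, one_pos, fun a _ => (Subsingleton.elim _ _).le⟩
  refine hs.induction_on ⟨1, one_pos, fun _ h => h.elim⟩
    (fun t u htu ⟨ε, hε, hu⟩ => ⟨ε, hε, fun a ha => hu a (htu ha)⟩)
    (fun t u ⟨ε, hε, ht⟩ ⟨δ, hδ, hu⟩ => ⟨min ε δ, lt_min hε hδ, ?_⟩) fun a₀ ha₀ => ?_
  · rintro a (ha | ha)
    · exact (algebraMap_mono A (min_le_left ε δ)).trans (ht a ha)
    · exact (algebraMap_mono A (min_le_right ε δ)).trans (hu a ha)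
  · obtain ⟨ε, hε, hεa₀⟩ := (CFC.exists_pos_algebraMap_le_iff (hpos a₀ ha₀).isSelfAdjoint).2
      fun x hx => (hpos a₀ ha₀).spectrum_pos hx
    refine ⟨Metric.ball a₀ (ε / 2) ∩ s, Filter.inter_mem
      (mem_nhdsWithin_of_mem_nhds (Metric.ball_mem_nhds a₀ (half_pos hε))) self_mem_nhdsWithin,
      ε / 2, half_pos hε, fun a ⟨hball, ha⟩ => ?_⟩
    have hdist : a₀ - a ≤ algebraMap ℝ A (ε / 2) :=
      ((hpos a₀ ha₀).isSelfAdjoint.sub (hpos a ha).isSelfAdjoint).le_algebraMap_norm_self.trans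
        (algebraMap_mono A (by rw [← dist_eq_norm, dist_comm]; exact hball.le))
    calc algebraMap ℝ A (ε / 2) = algebraMap ℝ A ε - algebraMap ℝ A (ε / 2) := by
          rw [← map_sub]; congr 1; ring
      _ ≤ a₀ - algebraMap ℝ A (ε / 2) := sub_le_sub_right hεa₀ _
      _ ≤ a := sub_le_comm.1 hdist

end CStarAlgebra

section Geometric

theorem exists_forall_le_of_forall_add_le {α : Type*} [Preorder α] [IsDirectedOrder α]
    {u : ℕ → α} {n₀ p : ℕ} (hp : p ≠ 0) (hu : ∀ k ≥ n₀, u (k + p) ≤ u k) :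
    ∃ C, ∀ k ≥ n₀, u k ≤ C := by
  classical
  have : Nonempty α := ⟨u 0⟩
  obtain ⟨C, hC⟩ := ((Finset.range (n₀ + p)).image u).exists_le
  refine ⟨C, fun k => ?_⟩
  induction k using Nat.strong_induction_on with
  | _ k ih =>
    intro hk
    rcases lt_or_ge k (n₀ + p) with hlt | hge
    · exact hC _ (Finset.mem_image_of_mem u (Finset.mem_range.2 hlt))
    · obtain ⟨j, rfl⟩ := Nat.exists_eq_add_of_le' (le_of_add_le_right hge)
      have hj : n₀ ≤ j := Nat.add_le_add_iff_right.1 hge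
      exact (hu j hj).trans (ih j (by omega) hj)

theorem exists_forall_le_mul_pow_of_forall_add_le_mul {w : ℕ → ℝ} {n₀ p : ℕ} (hp : p ≠ 0) {ρ : ℝ}
    (hρ : ρ ∈ Set.Ioo 0 1) (hw : ∀ k ≥ n₀, w (k + p) ≤ ρ * w k) :
    ∃ C > 0, ∃ r ∈ Set.Ico (0 : ℝ) 1, ∀ k ≥ n₀, w k ≤ C * r ^ k := by
  set r := ρ ^ (p : ℝ)⁻¹
  have hr : 0 < r := Real.rpow_pos_of_pos hρ.1 _
  have hrp : r ^ p = ρ := Real.rpow_inv_natCast_pow hρ.1.le hp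
  obtain ⟨C, hC⟩ := exists_forall_le_of_forall_add_le (u := fun k => w k / r ^ k) hp fun k hk =>
    calc w (k + p) / r ^ (k + p) ≤ ρ * w k / r ^ (k + p) := by gcongr; exact hw k hk
      _ = w k / r ^ k := by rw [pow_add, hrp, mul_comm, mul_div_mul_right _ _ hρ.1.ne']
  refine ⟨max C 1, by positivity, r, ⟨hr.le, Real.rpow_lt_one hρ.1.le hρ.2 (by positivity)⟩,
    fun k hk => ?_⟩
  rw [← div_le_iff₀ (pow_pos hr k)]
  exact (hC k hk).trans (le_max_left C 1)

end Geometric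

section Pencil

open scoped MatrixOrder

variable {𝕜 n : Type*} [RCLike 𝕜] [Fintype n]

/-- The real generalized eigenvalues of the matrix pencil `(A, B)`. -/
def pencilSpectrum (A B : Matrix n n 𝕜) : Set ℝ :=
  {t : ℝ | ∃ v : n → 𝕜, v ≠ 0 ∧ A *ᵥ v = t • (B *ᵥ v)}

theorem pos_of_mem_pencilSpectrum {A B : Matrix n n 𝕜} (hA : A.PosDef) (hB : 0 ≤ B) {t : ℝ}
    (ht : t ∈ pencilSpectrum A B) : 0 < t := by
  obtain ⟨v, hv, heig⟩ := ht
  have hpos := hA.dotProduct_mulVec_pos hv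
  rw [heig, dotProduct_smul] at hpos
  exact pos_of_smul_pos_right hpos (hB.posSemidef.dotProduct_mulVec_nonneg v)

theorem mem_pencilSpectrum_iff_not_isUnit [DecidableEq n] {A B : Matrix n n 𝕜} {t : ℝ} :
    t ∈ pencilSpectrum A B ↔ ¬ IsUnit (t • B - A) := by
  rw [isUnit_iff_isUnit_det, isUnit_iff_ne_zero, not_not, ← exists_mulVec_eq_zero_iff]
  simp only [pencilSpectrum, Set.mem_ofPred_eq, sub_mulVec, smul_mulVec, sub_eq_zero, eq_comm]

theorem pencilSpectrum_star_mul_mul [DecidableEq n] {R : Matrix n n 𝕜} (hR : IsUnit R)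
    (C : Matrix n n 𝕜) :
    pencilSpectrum (star R * C * R) (star R * R) = spectrum ℝ C := by
  ext t
  have hfactor : t • (star R * R) - star R * C * R = star R * (algebraMap ℝ _ t - C) * R := by
    simp [Algebra.algebraMap_eq_smul_one, mul_sub, sub_mul]
  rw [mem_pencilSpectrum_iff_not_isUnit, spectrum.mem_iff, hfactor, IsUnit.mul_right_iff hR,
    IsUnit.mul_left_iff hR.star]

theorem exists_eq_star_mul_mul_and_eq_star_mul [DecidableEq n] {A B : Matrix n n 𝕜}
    (hA : A.IsHermitian) (hB : B.PosDef) :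
    ∃ R C : Matrix n n 𝕜, IsUnit R ∧ C.IsHermitian ∧ A = star R * C * R ∧ B = star R * R := by
  obtain ⟨R, hR, rfl⟩ :=
    CStarAlgebra.isStrictlyPositive_iff_eq_star_mul_self.1 hB.isStrictlyPositive
  have hdet := (isUnit_iff_isUnit_det R).1 hR
  refine ⟨R, star R⁻¹ * A * R⁻¹, hR, isHermitian_conjTranspose_mul_mul _ hA, ?_, rfl⟩
  calc A = star (R⁻¹ * R) * A * (R⁻¹ * R) := by simp [nonsing_inv_mul _ hdet]
    _ = star R * (star R⁻¹ * A * R⁻¹) * R := by simp only [star_mul, mul_assoc]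

variable {A B : Matrix n n 𝕜}

theorem pencilSpectrum_finite (hA : A.IsHermitian) (hB : B.PosDef) :
    (pencilSpectrum A B).Finite := by
  classical
  obtain ⟨R, C, hR, -, rfl, rfl⟩ := exists_eq_star_mul_mul_and_eq_star_mul hA hB
  rw [pencilSpectrum_star_mul_mul hR]
  exact finite_real_spectrum

theorem pencilSpectrum_nonempty [Nonempty n] (hA : A.IsHermitian) (hB : B.PosDef) :
    (pencilSpectrum A B).Nonempty := by
  classical
  obtain ⟨R, C, hR, hC, rfl, rfl⟩ := exists_eq_star_mul_mul_and_eq_star_mul hA hB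
  rw [pencilSpectrum_star_mul_mul hR, hC.spectrum_real_eq_range_eigenvalues]
  exact Set.range_nonempty _

theorem smul_le_iff_forall_mem_pencilSpectrum (hA : A.IsHermitian) (hB : B.PosDef) {s : ℝ} :
    s • B ≤ A ↔ ∀ t ∈ pencilSpectrum A B, s ≤ t := by
  classical
  obtain ⟨R, C, hR, hC, rfl, rfl⟩ := exists_eq_star_mul_mul_and_eq_star_mul hA hB
  have hfactor : star R * C * R - s • (star R * R) = star R * (C - algebraMap ℝ _ s) * R := by
    simp [Algebra.algebraMap_eq_smul_one, mul_sub, sub_mul]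
  rw [pencilSpectrum_star_mul_mul hR, ← algebraMap_le_iff_le_spectrum hC, ← sub_nonneg, hfactor,
    hR.star_left_conjugate_nonneg_iff, sub_nonneg]

theorem le_smul_iff_forall_mem_pencilSpectrum (hA : A.IsHermitian) (hB : B.PosDef) {s : ℝ} :
    A ≤ s • B ↔ ∀ t ∈ pencilSpectrum A B, t ≤ s := by
  classical
  obtain ⟨R, C, hR, hC, rfl, rfl⟩ := exists_eq_star_mul_mul_and_eq_star_mul hA hB
  have hfactor : s • (star R * R) - star R * C * R = star R * (algebraMap ℝ _ s - C) * R := by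
    simp [Algebra.algebraMap_eq_smul_one, mul_sub, sub_mul]
  rw [pencilSpectrum_star_mul_mul hR, ← le_algebraMap_iff_spectrum_le hC, ← sub_nonneg, hfactor,
    hR.star_left_conjugate_nonneg_iff, sub_nonneg]

variable [Nonempty n]

theorem smul_le_iff_le_sInf_pencilSpectrum (hA : A.IsHermitian) (hB : B.PosDef) {s : ℝ} :
    s • B ≤ A ↔ s ≤ sInf (pencilSpectrum A B) := by
  rw [smul_le_iff_forall_mem_pencilSpectrum hA hB, le_csInf_iff
    (pencilSpectrum_finite hA hB).bddBelow (pencilSpectrum_nonempty hA hB)]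

theorem le_smul_iff_sSup_pencilSpectrum_le (hA : A.IsHermitian) (hB : B.PosDef) {s : ℝ} :
    A ≤ s • B ↔ sSup (pencilSpectrum A B) ≤ s := by
  rw [le_smul_iff_forall_mem_pencilSpectrum hA hB, csSup_le_iff
    (pencilSpectrum_finite hA hB).bddAbove (pencilSpectrum_nonempty hA hB)]

theorem isGreatest_sInf_pencilSpectrum (hA : A.IsHermitian) (hB : B.PosDef) :
    IsGreatest {s : ℝ | s • B ≤ A} (sInf (pencilSpectrum A B)) :=
  ⟨(smul_le_iff_le_sInf_pencilSpectrum hA hB).2 le_rfl,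
    fun _ => (smul_le_iff_le_sInf_pencilSpectrum hA hB).1⟩

theorem sInf_pencilSpectrum_pos (hA : A.PosDef) (hB : B.PosDef) :
    0 < sInf (pencilSpectrum A B) :=
  pos_of_mem_pencilSpectrum hA hB.posSemidef.nonneg
    ((pencilSpectrum_nonempty hA.1 hB).csInf_mem (pencilSpectrum_finite hA.1 hB))

end Pencil

section StronglyPositive

open scoped MatrixOrder Matrix.Norms.L2Operator

variable {n m : Type*}

/-- A linear map of matrix algebras is strongly positive if it sends every nonzero positive
semidefinite matrix to a positive definite one, that is, the cone into the interior of the cone. -/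
def IsStronglyPositive (T : Matrix n n ℂ →ₗ[ℂ] Matrix m m ℂ) : Prop :=
  ∀ X : Matrix n n ℂ, X.PosSemidef → X ≠ 0 → (T X).PosDef

theorem IsStronglyPositive.map_nonneg {T : Matrix n n ℂ →ₗ[ℂ] Matrix m m ℂ}
    (hT : IsStronglyPositive T) {X : Matrix n n ℂ} (hX : 0 ≤ X) : 0 ≤ T X := by
  rcases eq_or_ne X 0 with rfl | hX0
  · rw [map_zero]
  · exact (hT X hX.posSemidef hX0).posSemidef.nonneg

theorem IsStronglyPositive.map_le_map {T : Matrix n n ℂ →ₗ[ℂ] Matrix m m ℂ}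
    (hT : IsStronglyPositive T) {X Y : Matrix n n ℂ} (hXY : X ≤ Y) : T X ≤ T Y := by
  simpa only [map_sub, sub_nonneg] using hT.map_nonneg (sub_nonneg.2 hXY)

theorem IsStronglyPositive.pow_of_le [Finite n] {S : Module.End ℂ (Matrix n n ℂ)} {p : ℕ}
    (hS : ∀ X, X.PosSemidef → (S X).PosSemidef) (hp : p ≠ 0) (hSp : IsStronglyPositive (S ^ p))
    {k : ℕ} (hk : p ≤ k) : IsStronglyPositive (S ^ k) := by
  classical
  have := Fintype.ofFinite n
  intro X hX hX0
  have hpow (j : ℕ) : ((S ^ j) X).PosSemidef := by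
    induction j with
    | zero => exact hX
    | succ j ih => rw [pow_succ', Module.End.mul_apply]; exact hS _ ih
  have : Nontrivial (Matrix n n ℂ) := nontrivial_of_ne X 0 hX0
  induction k, hk using Nat.le_induction with
  | base => exact hSp X hX hX0
  | succ k hk ih =>
    obtain ⟨j, hj⟩ := Nat.exists_eq_add_of_le (Nat.le_succ_of_le hk)
    have hSj : (S ^ j) X ≠ 0 := fun hzero => ih.isUnit.ne_zero <| by
      rw [← Nat.sub_add_cancel (show j ≤ k by omega), pow_add, Module.End.mul_apply, hzero,
        map_zero]
    rw [show k + 1 = p + j from hj, pow_add, Module.End.mul_apply]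
    exact hSp _ (hpow j) hSj

variable [Fintype n]

theorem re_trace_nonneg {X : Matrix n n ℂ} (hX : 0 ≤ X) : 0 ≤ X.trace.re :=
  (Complex.le_def.1 hX.posSemidef.trace_nonneg).1

theorem re_trace_pos {X : Matrix n n ℂ} (hX : 0 ≤ X) (hX0 : X ≠ 0) : 0 < X.trace.re := by
  refine (re_trace_nonneg hX).lt_of_ne' fun hre => hX0 ?_
  rw [← hX.posSemidef.trace_eq_zero_iff]
  exact Complex.ext hre (Complex.le_def.1 hX.posSemidef.trace_nonneg).2.symm

theorem le_re_trace_smul_one [DecidableEq n] {X : Matrix n n ℂ} (hX : 0 ≤ X) :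
    X ≤ X.trace.re • (1 : Matrix n n ℂ) := by
  have hherm := hX.posSemidef.isHermitian
  rw [← Algebra.algebraMap_eq_smul_one, le_algebraMap_iff_spectrum_le hherm,
    hherm.spectrum_real_eq_range_eigenvalues, Set.forall_mem_range]
  intro i
  rw [hherm.trace_eq_sum_eigenvalues, ← RCLike.ofReal_sum]
  exact Finset.single_le_sum (fun j _ => hX.posSemidef.eigenvalues_nonneg j) (Finset.mem_univ i)

theorem isCompact_nonneg_re_trace_eq_one :
    IsCompact {X : Matrix n n ℂ | 0 ≤ X ∧ X.trace.re = 1} := by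
  classical
  have htrace : Continuous fun X : Matrix n n ℂ => X.trace.re :=
    Complex.continuous_re.comp continuous_id.matrix_trace
  refine (isCompact_closedBall (0 : Matrix n n ℂ) 1).of_isClosed_subset
    (isClosed_Ici.inter (isClosed_eq htrace continuous_const)) fun X ⟨hX, htr⟩ => ?_
  rw [mem_closedBall_zero_iff, CStarAlgebra.norm_le_one_iff_of_nonneg X hX]
  simpa only [htr, one_smul] using le_re_trace_smul_one hX

theorem IsStronglyPositive.exists_pos_mul_re_trace_smul_one_le [Finite m] [DecidableEq m]
    {T : Matrix n n ℂ →ₗ[ℂ] Matrix m m ℂ} (hT : IsStronglyPositive T) :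
    ∃ ε > 0, ∀ X, 0 ≤ X → (ε * X.trace.re) • (1 : Matrix m m ℂ) ≤ T X := by
  classical
  have := Fintype.ofFinite m
  have hTcont : Continuous T := T.continuous_of_finiteDimensional
  obtain ⟨ε, hε, hle⟩ := exists_pos_algebraMap_le_of_isCompact
    (isCompact_nonneg_re_trace_eq_one.image hTcont) (by
      rintro _ ⟨X, ⟨hX, htr⟩, rfl⟩
      refine (hT X hX.posSemidef ?_).isStrictlyPositive
      rintro rfl
      simp at htr)
  refine ⟨ε, hε, fun X hX => ?_⟩
  rcases eq_or_ne X 0 with rfl | hX0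
  · simp
  have htr := re_trace_pos hX hX0
  have hnormalized := hle _ ⟨X.trace.re⁻¹ • X,
    ⟨smul_nonneg (inv_nonneg.2 htr.le) hX, by simp [trace_smul, htr.ne']⟩, rfl⟩
  rw [Algebra.algebraMap_eq_smul_one, T.map_smul_of_tower, le_inv_smul_iff_of_pos htr,
    smul_smul, mul_comm] at hnormalized
  exact hnormalized

theorem IsStronglyPositive.exists_map_mem_Icc_re_trace_smul [Finite m] [DecidableEq n]
    {T : Matrix n n ℂ →ₗ[ℂ] Matrix m m ℂ} (hT : IsStronglyPositive T) :
    ∃ a ∈ Set.Ioo (0 : ℝ) 1, ∀ X, 0 ≤ X →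
      T X ∈ Set.Icc ((a * X.trace.re) • T 1) (X.trace.re • T 1) := by
  classical
  have := Fintype.ofFinite m
  obtain ⟨ε, hε, hle⟩ := hT.exists_pos_mul_re_trace_smul_one_le
  have hT1 : 0 ≤ T 1 := hT.map_nonneg zero_le_one
  set c := (T 1).trace.re
  have hc : 0 ≤ c := re_trace_nonneg hT1
  have hac : ε / (c + ε + 1) * c ≤ ε := by
    rw [div_mul_eq_mul_div, div_le_iff₀ (by positivity)]
    nlinarith
  refine ⟨ε / (c + ε + 1), ⟨by positivity, (div_lt_one (by positivity)).2 (by linarith)⟩,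
    fun X hX => ⟨?_, ?_⟩⟩
  · have htr := re_trace_nonneg hX
    calc (ε / (c + ε + 1) * X.trace.re) • T 1
        ≤ (ε / (c + ε + 1) * X.trace.re) • (c • (1 : Matrix m m ℂ)) :=
          smul_le_smul_of_nonneg_left (le_re_trace_smul_one hT1) (by positivity)
      _ ≤ (ε * X.trace.re) • (1 : Matrix m m ℂ) := by
          rw [smul_smul, mul_right_comm]
          gcongr
      _ ≤ T X := hle X hX
  · simpa only [T.map_smul_of_tower] using hT.map_le_map (le_re_trace_smul_one hX)

/-- The length of the interval spanned by the real generalized eigenvalues of the pencil `(A, B)`.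
It is the gap between the two bracketing bounds, and it serves here as an additive substitute for
Hilbert's projective metric. -/
def pencilWidth (A B : Matrix n n ℂ) : ℝ :=
  sSup (pencilSpectrum A B) - sInf (pencilSpectrum A B)

theorem IsStronglyPositive.exists_pencilWidth_map_le [Fintype m] [Nonempty n] [Nonempty m]
    {T : Matrix n n ℂ →ₗ[ℂ] Matrix m m ℂ} (hT : IsStronglyPositive T) :
    ∃ ρ ∈ Set.Ioo (0 : ℝ) 1, ∀ A B : Matrix n n ℂ, A.IsHermitian → B.PosDef →
      pencilWidth (T A) (T B) ≤ ρ * pencilWidth A B := by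
  classical
  obtain ⟨a, ha, hIcc⟩ := hT.exists_map_mem_Icc_re_trace_smul
  refine ⟨1 - a, ⟨sub_pos.2 ha.2, sub_lt_self 1 ha.1⟩, fun A B hA hB => ?_⟩
  have hB0 : B ≠ 0 := hB.isUnit.ne_zero
  have hTB := hT B hB.posSemidef hB0
  obtain ⟨m', M', ⟨hm', hM'⟩, hwidth⟩ := exists_map_mem_Icc_smul_sub_eq
    (T := T.restrictScalars ℝ) (φ := Complex.reLm ∘ₗ traceLinearMap n ℝ ℂ) (e := T 1)
    ha.1.le (fun _ => re_trace_nonneg) hIcc hB.posSemidef.nonneg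
    (re_trace_pos hB.posSemidef.nonneg hB0)
    ⟨(isGreatest_sInf_pencilSpectrum hA hB).1,
      (le_smul_iff_sSup_pencilSpectrum_le hA hB).2 le_rfl⟩
  have hTA : (T A).IsHermitian := IsSelfAdjoint.of_ge hm' (IsSelfAdjoint.smul (.all m') hTB.1)
  calc pencilWidth (T A) (T B) ≤ M' - m' :=
        sub_le_sub ((le_smul_iff_sSup_pencilSpectrum_le hTA hTB).1 hM')
          ((smul_le_iff_le_sInf_pencilSpectrum hTA hTB).1 hm')
    _ = (1 - a) * pencilWidth A B := hwidth

theorem IsStronglyPositive.exists_pencilWidth_pow_le {S : Module.End ℂ (Matrix n n ℂ)} {p : ℕ}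
    (hS : ∀ X, X.PosSemidef → (S X).PosSemidef) (hp : p ≠ 0) (hSp : IsStronglyPositive (S ^ p))
    {Q : Matrix n n ℂ} (hQ : Q.PosSemidef) (hQ0 : Q ≠ 0) :
    ∃ C > 0, ∃ r ∈ Set.Ico (0 : ℝ) 1, ∀ k ≥ p,
      pencilWidth ((S ^ k) Q) ((S ^ (k + 1)) Q) ≤ C * r ^ k := by
  have : Nonempty n := not_isEmpty_iff.1 fun _ => hQ0 (Subsingleton.elim Q 0)
  obtain ⟨ρ, hρ, hcontract⟩ := hSp.exists_pencilWidth_map_le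
  have hpos {k : ℕ} (hk : p ≤ k) : ((S ^ k) Q).PosDef := hSp.pow_of_le hS hp hk Q hQ hQ0
  have hcomp (k : ℕ) : (S ^ p) ((S ^ k) Q) = (S ^ (k + p)) Q := by
    rw [add_comm, pow_add, Module.End.mul_apply]
  refine exists_forall_le_mul_pow_of_forall_add_le_mul hp hρ fun k hk => ?_
  calc pencilWidth ((S ^ (k + p)) Q) ((S ^ (k + p + 1)) Q)
      = pencilWidth ((S ^ p) ((S ^ k) Q)) ((S ^ p) ((S ^ (k + 1)) Q)) := by
        rw [hcomp, hcomp, add_right_comm]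
    _ ≤ ρ * pencilWidth ((S ^ k) Q) ((S ^ (k + 1)) Q) :=
        hcontract _ _ (hpos hk).1 (hpos (Nat.le_succ_of_le hk))

end StronglyPositive

section Pval

open scoped MatrixOrder

variable {N : ℕ} {L : Mat N} {V : Mat N →ₗ[ℂ] Mat N}

theorem genSpec_eq_pencilSpectrum (L : Mat N) (V : Mat N →ₗ[ℂ] Mat N) (B : Mat N) :
    genSpec L V B = pencilSpectrum B (Smap L V B) := rfl

theorem le_iff_forall_qf_le {A B : Mat N} (hA : A.IsHermitian) (hB : B.IsHermitian) :
    A ≤ B ↔ ∀ v, qf A v ≤ qf B v := by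
  have hBA := hB.sub hA
  rw [Matrix.le_iff, posSemidef_iff_dotProduct_mulVec, and_iff_right hBA]
  refine forall_congr' fun v => ?_
  have him : (star v ⬝ᵥ (B - A) *ᵥ v).im = 0 := hBA.im_star_dotProduct_mulVec_self v
  rw [Complex.le_def, Complex.zero_im, him, eq_self, and_true, Complex.zero_re, sub_mulVec,
    dotProduct_sub, Complex.sub_re, sub_nonneg, qf, qf]

theorem qf_smul (m : ℝ) (A : Mat N) (v : Fin N → ℂ) : qf (m • A) v = m * qf A v := by
  simp [qf, smul_mulVec, dotProduct_smul]

theorem qf_pos {A : Mat N} (hA : A.PosDef) {v : Fin N → ℂ} (hv : v ≠ 0) : 0 < qf A v :=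
  (Complex.lt_def.1 (hA.dotProduct_mulVec_pos hv)).1

theorem ofReal_le_iInf_qf_div_iff {A B : Mat N} (hA : A.PosDef) (hB : B.IsHermitian) {m : ℝ}
    (hm : 0 ≤ m) :
    ENNReal.ofReal m ≤ ⨅ v : {v : Fin N → ℂ // v ≠ 0},
      ENNReal.ofReal (qf A v.1) / ENNReal.ofReal (qf B v.1) ↔ m • B ≤ A := by
  rw [le_iff_forall_qf_le (IsSelfAdjoint.smul (.all m) hB) hA.1, le_iInf_iff, Subtype.forall]
  refine forall_congr' fun v => ?_
  rcases eq_or_ne v 0 with rfl | hv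
  · simp [qf]
  have hAv := qf_pos hA hv
  rw [forall_prop_of_true hv, ENNReal.le_div_iff_mul_le (.inr (ENNReal.ofReal_pos.2 hAv).ne')
    (.inl ENNReal.ofReal_ne_top), ← ENNReal.ofReal_mul hm, ENNReal.ofReal_le_ofReal_iff hAv.le,
    qf_smul]

theorem conjBy_conjBy (K M Q : Mat N) : conjBy K (conjBy M Q) = conjBy (M * K) Q := by
  simp only [conjBy, LinearMap.coe_mk, AddHom.coe_mk, conjTranspose_mul, Matrix.mul_assoc]

theorem conjBy_one (Q : Mat N) : conjBy 1 Q = Q := by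
  simp only [conjBy, LinearMap.coe_mk, AddHom.coe_mk, conjTranspose_one, Matrix.one_mul,
    Matrix.mul_one]

theorem posDef_conjBy {K A : Mat N} (hK : IsUnit K) (hA : A.PosDef) : (conjBy K A).PosDef :=
  hA.conjTranspose_mul_mul_same (mulVec_injective_of_isUnit hK)

theorem Pval_eq_iSup_iInf_qf_div (hL : IsUnit L) :
    Pval L V = ⨆ A : {A : Mat N // A.PosDef}, ⨅ v : {v : Fin N → ℂ // v ≠ 0},
      ENNReal.ofReal (qf A.1 v.1) / ENNReal.ofReal (qf (Smap L V A.1) v.1) := by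
  have hdet := (isUnit_iff_isUnit_det L).1 hL
  refine Function.Surjective.iSup_congr (fun Q => ⟨conjBy L Q.1, posDef_conjBy hL Q.2⟩)
    (fun A => ⟨⟨conjBy L⁻¹ A.1, posDef_conjBy (isUnit_nonsing_inv_iff.2 hL) A.2⟩, ?_⟩)
    fun Q => ?_
  · rw [Subtype.ext_iff]
    simp only [conjBy_conjBy, nonsing_inv_mul L hdet, conjBy_one]
  · simp only [Smap, LinearMap.comp_apply, conjBy_conjBy, mul_nonsing_inv L hdet, conjBy_one]
    rfl

theorem Pval_mem_Icc_ofReal_genSpec [Nonempty (Fin N)] (hL : IsUnit L)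
    (hS : ∀ X, X.PosSemidef → (Smap L V X).PosSemidef) {A : Mat N} (hA : A.PosDef)
    (hSA : (Smap L V A).PosDef) :
    Pval L V ∈ Set.Icc (ENNReal.ofReal (sInf (genSpec L V A)))
      (ENNReal.ofReal (sSup (genSpec L V A))) := by
  simp only [genSpec_eq_pencilSpectrum, Pval_eq_iSup_iInf_qf_div hL]
  have hinf := sInf_pencilSpectrum_pos hA hSA
  have hsup := hinf.trans_le (Real.sInf_le_sSup _ (pencilSpectrum_finite hA.1 hSA).bddBelow
    (pencilSpectrum_finite hA.1 hSA).bddAbove)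
  refine ⟨le_iSup_of_le ⟨A, hA⟩ ?_, iSup_le fun ⟨B, hB⟩ => ENNReal.le_of_forall_nnreal_lt ?_⟩
  · exact (ofReal_le_iInf_qf_div_iff hA hSA.1 hinf.le).2
      (isGreatest_sInf_pencilSpectrum hA.1 hSA).1
  · intro t ht
    rw [← ENNReal.ofReal_coe_nnreal] at ht ⊢
    refine ENNReal.ofReal_le_ofReal ?_
    exact le_of_smul_map_le_of_le_smul_map (S := (Smap L V).restrictScalars ℝ)
      (fun X hX => (hS X hX.posSemidef).nonneg) (isGreatest_sInf_pencilSpectrum hB.1 hA)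
      (sInf_pencilSpectrum_pos hB hA) hsup ((le_smul_iff_sSup_pencilSpectrum_le hA.1 hSA).2 le_rfl)
      ((ofReal_le_iInf_qf_div_iff hB (hS B hB.posSemidef).1 t.2).1 ht.le)

theorem Pval_pos_and_lt_top [Nonempty (Fin N)] (hL : IsUnit L)
    (hS : ∀ X, X.PosSemidef → (Smap L V X).PosSemidef) {A : Mat N} (hA : A.PosDef)
    (hSA : (Smap L V A).PosDef) : 0 < Pval L V ∧ Pval L V < ⊤ := by
  obtain ⟨hinf, hsup⟩ := Pval_mem_Icc_ofReal_genSpec hL hS hA hSA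
  exact ⟨(ENNReal.ofReal_pos.2 (sInf_pencilSpectrum_pos hA hSA)).trans_le hinf,
    hsup.trans_lt ENNReal.ofReal_lt_top⟩

theorem toReal_Pval_mem_Icc_genSpec [Nonempty (Fin N)] (hL : IsUnit L)
    (hS : ∀ X, X.PosSemidef → (Smap L V X).PosSemidef) {A : Mat N} (hA : A.PosDef)
    (hSA : (Smap L V A).PosDef) :
    (Pval L V).toReal ∈ Set.Icc (sInf (genSpec L V A)) (sSup (genSpec L V A)) := by
  obtain ⟨hinf, hsup⟩ := Pval_mem_Icc_ofReal_genSpec hL hS hA hSA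
  have hsup_nonneg : 0 ≤ sSup (genSpec L V A) :=
    Real.sSup_nonneg fun _ ht => (pos_of_mem_pencilSpectrum hA hSA.posSemidef.nonneg ht).le
  exact ⟨(ENNReal.ofReal_le_iff_le_toReal (hsup.trans_lt ENNReal.ofReal_lt_top).ne).1 hinf,
    ENNReal.toReal_le_of_le_ofReal hsup_nonneg hsup⟩

end Pval

/-- if `𝒮` is primitive (some power `𝒮^{k₀}` maps nonzero PSD matrices to
positive definite matrices), then `P ∈ (0,∞)` and for every nonzero `Q ⪰ 0` the bracketing
bounds `min σ_{𝒮^k[Q]}` and `max σ_{𝒮^k[Q]}` converge to `P` exponentially fast. -/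
theorem stmt4 {N : ℕ} (hN : 0 < N) (L : Mat N) (hL : IsUnit L)
    (V : Mat N →ₗ[ℂ] Mat N)
    (hVherm : ∀ Q : Mat N, Q.IsHermitian → (V Q).IsHermitian)
    (hVpsd : ∀ Q : Mat N, Q.PosSemidef → (V Q).PosSemidef)
    (k₀ : ℕ) (hk₀ : 1 ≤ k₀)
    (hprim : ∀ Q : Mat N, Q.PosSemidef → Q ≠ 0 → ((Smap L V ^ k₀) Q).PosDef) :
    (0 < Pval L V ∧ Pval L V < ⊤) ∧
    ∀ Q : Mat N, Q.PosSemidef → Q ≠ 0 →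
      ∃ C > (0 : ℝ), ∃ r : ℝ, 0 ≤ r ∧ r < 1 ∧
        ∀ k : ℕ, k₀ ≤ k →
          ((Smap L V ^ (k + 1)) Q).PosDef ∧
          Set.Finite (genSpec L V ((Smap L V ^ k) Q)) ∧
          Set.Nonempty (genSpec L V ((Smap L V ^ k) Q)) ∧
          |sInf (genSpec L V ((Smap L V ^ k) Q)) - (Pval L V).toReal| ≤ C * r ^ k ∧
          |sSup (genSpec L V ((Smap L V ^ k) Q)) - (Pval L V).toReal| ≤ C * r ^ k := by
  have : Nonempty (Fin N) := Fin.pos_iff_nonempty.1 hN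
  have hS (X : Mat N) (hX : X.PosSemidef) : (Smap L V X).PosSemidef :=
    hVpsd _ (hX.conjTranspose_mul_mul_same _)
  have hpow : IsStronglyPositive (Smap L V ^ k₀) := hprim
  have hk₀_ne : k₀ ≠ 0 := Nat.one_le_iff_ne_zero.1 hk₀
  have hpos {Q : Mat N} (hQ : Q.PosSemidef) (hQ0 : Q ≠ 0) {k : ℕ} (hk : k₀ ≤ k) :
      ((Smap L V ^ k) Q).PosDef := hpow.pow_of_le hS hk₀_ne hk Q hQ hQ0
  have hsucc (Q : Mat N) (k : ℕ) : Smap L V ((Smap L V ^ k) Q) = (Smap L V ^ (k + 1)) Q := by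
    rw [pow_succ', Module.End.mul_apply]
  refine ⟨Pval_pos_and_lt_top hL hS (hpos PosSemidef.one one_ne_zero le_rfl)
    (hsucc 1 k₀ ▸ hpos PosSemidef.one one_ne_zero k₀.le_succ), fun Q hQ hQ0 => ?_⟩
  obtain ⟨C, hC, r, ⟨hr0, hr1⟩, hwidth⟩ := hpow.exists_pencilWidth_pow_le hS hk₀_ne hQ hQ0
  refine ⟨C, hC, r, hr0, hr1, fun k hk => ?_⟩
  have hA := hpos hQ hQ0 hk
  have hSA := hpos hQ hQ0 (Nat.le_succ_of_le hk)
  have hwidth_k := hwidth k hk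
  rw [← hsucc] at hSA hwidth_k
  obtain ⟨hinf, hsup⟩ := toReal_Pval_mem_Icc_genSpec hL hS hA hSA
  have hle := hinf.trans hsup
  exact ⟨hsucc Q k ▸ hSA, pencilSpectrum_finite hA.1 hSA, pencilSpectrum_nonempty hA.1 hSA,
    (abs_sub_le_of_le_of_le le_rfl hle hinf hsup).trans hwidth_k,
    (abs_sub_le_of_le_of_le hle le_rfl hinf hsup).trans hwidth_k⟩

end
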